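/- Let p be a prime, n ≥ 0, let R = ℤ[X₁,…,Xₙ] be the polynomial ring over ℤ in n variables, and let I ⊆ R be the ideal generated by p and by X₁,…,Xₙ. Then for every a ∈ R and every m ≥ 0: if p·a ∈ I^{m+1}, then a ∈ I^{m}. -/

import Mathlib

open MvPolynomial

lemma aux_one (p n : ℕ) (g : MvPolynomial (Fin n) ℤ)
    (hg : g ∈ Ideal.span ({(p : MvPolynomial (Fin n) ℤ)} ∪ Set.range X)) :
    (p : ℤ) ∣ coeff 0 g := by
  have h : Ideal.span ({(p : MvPolynomial (Fin n) ℤ)} ∪ Set.range X) ≤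
      Ideal.comap constantCoeff (Ideal.span {(p : ℤ)}) := by
    rw [Ideal.span_le]
    rintro x (hx | ⟨i, rfl⟩)
    · rw [Set.mem_singleton_iff] at hx
      subst hx
      simp
    · simp
  have := h hg
  rw [Ideal.mem_comap, Ideal.mem_span_singleton] at this
  exact this

lemma aux_fwd (p n m : ℕ) : ∀ (f : MvPolynomial (Fin n) ℤ)
    (_ : f ∈ (Ideal.span ({(p : MvPolynomial (Fin n) ℤ)} ∪ Set.range X)) ^ m)
    (d : Fin n →₀ ℕ), (p : ℤ) ^ (m - d.degree) ∣ coeff d f := by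
  induction m with
  | zero => intro f _ d; simp
  | succ m ih =>
    intro f hf d
    rw [pow_succ] at hf
    induction hf using Submodule.mul_induction_on' with
    | mem_mul_mem f hf g hg =>
      rw [coeff_mul]
      refine Finset.dvd_sum fun x hx => ?_
      rw [Finset.HasAntidiagonal.mem_antidiagonal] at hx
      have h1 := ih f hf x.1
      have hd : d.degree = x.1.degree + x.2.degree := by rw [← hx, map_add]
      have h2 : (p : ℤ) ^ (1 - x.2.degree) ∣ coeff x.2 g := by
        by_cases h0 : x.2 = 0
        · rw [h0]; simpa using aux_one p n g hg
        · have : x.2.degree ≠ 0 := by rwa [Ne, Finsupp.degree_eq_zero_iff]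
          have : 1 - x.2.degree = 0 := by omega
          simp [this]
      refine (pow_dvd_pow _ ?_).trans (pow_add (p : ℤ) _ _ ▸ mul_dvd_mul h1 h2)
      omega
    | add f _ g _ hf hg => rw [coeff_add]; exact dvd_add hf hg

lemma aux_bwd (p n m : ℕ) (f : MvPolynomial (Fin n) ℤ)
    (h : ∀ d : Fin n →₀ ℕ, (p : ℤ) ^ (m - d.degree) ∣ coeff d f) :
    f ∈ (Ideal.span ({(p : MvPolynomial (Fin n) ℤ)} ∪ Set.range X)) ^ m := by
  rw [f.as_sum]
  refine Ideal.sum_mem _ fun d _ => ?_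
  obtain ⟨c, hc⟩ := h d
  have hX : (monomial d (1 : ℤ)) ∈
      (Ideal.span ({(p : MvPolynomial (Fin n) ℤ)} ∪ Set.range X)) ^ d.degree := by
    have h1 : idealOfVars (Fin n) ℤ ≤
        Ideal.span ({(p : MvPolynomial (Fin n) ℤ)} ∪ Set.range X) :=
      Ideal.span_mono Set.subset_union_right
    exact Ideal.pow_right_mono h1 _
      ((monomial_mem_pow_idealOfVars_iff _ d one_ne_zero).2 le_rfl)
  have hP : (p : MvPolynomial (Fin n) ℤ) ^ (m - d.degree) ∈
      (Ideal.span ({(p : MvPolynomial (Fin n) ℤ)} ∪ Set.range X)) ^ (m - d.degree) :=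
    Ideal.pow_mem_pow (Ideal.subset_span (Set.mem_union_left _ (Set.mem_singleton _))) _
  have e : monomial d (coeff d f) =
      C c * ((p : MvPolynomial (Fin n) ℤ) ^ (m - d.degree) * monomial d (1 : ℤ)) := by
    have : (p : MvPolynomial (Fin n) ℤ) = C (p : ℤ) := by simp
    rw [hc, this, ← C_pow, C_mul_monomial, C_mul_monomial]
    congr 1
    ring
  rw [e]
  refine Ideal.mul_mem_left _ _ ?_
  have := Ideal.mul_mem_mul hP hX
  rw [← pow_add] at this
  exact Ideal.pow_le_pow_right (by omega) this

/-- Let `p` be a prime, `R = ℤ[X₁,…,Xₙ]`, and `I = (p, X₁, …, Xₙ)`.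
Then for every `a ∈ R` and `m ≥ 0`: if `p·a ∈ I^{m+1}` then `a ∈ I^{m}`. -/
theorem stmt_3 (p : ℕ) (hp : p.Prime) (n : ℕ) :
    ∀ (a : MvPolynomial (Fin n) ℤ) (m : ℕ),
      (p : MvPolynomial (Fin n) ℤ) * a ∈
          (Ideal.span ({(p : MvPolynomial (Fin n) ℤ)} ∪ Set.range X)) ^ (m + 1) →
      a ∈ (Ideal.span ({(p : MvPolynomial (Fin n) ℤ)} ∪ Set.range X)) ^ m := by
  intro a m h
  refine aux_bwd p n m a fun d => ?_
  have h1 := aux_fwd p n (m + 1) _ h d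
  have e : (p : MvPolynomial (Fin n) ℤ) = C (p : ℤ) := by simp
  rw [e, coeff_C_mul] at h1
  by_cases hd : d.degree ≤ m
  · rw [Nat.succ_sub hd, pow_succ'] at h1
    exact (mul_dvd_mul_iff_left (by exact_mod_cast hp.ne_zero)).1 h1
  · have : m - d.degree = 0 := by omega
    simp [this]
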